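/- Let X be a Polish space, Z ⊆ X × Y closed, μ̄₀ a Borel probability measure on Z with first marginal m₀ ∈ 𝒫¹(X), and m₁ ∈ 𝒫¹(X). Then the optimal transport problem inf over ν ∈ 𝒫(Z × X) with π₁₂#ν = μ̄₀ and π₃#ν = m₁ of ∫ d_X(x, x') dν(x, y, x') has a solution, and its value equals the Kantorovich–Rubinstein distance d₁(m₀, m₁). -/

import Mathlib

open MeasureTheory
open scoped ENNReal
open Filter ProbabilityTheory
open scoped NNReal Topology

/-!
Pushing a competitor `ν` forward by `π₁₃` gives a coupling of `m₀` and `m₁` with the same cost, and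
gluing shows that every such coupling arises in this way. The problem is therefore the optimal
transport problem between `m₀` and `m₁`: the couplings form a compact set on which the cost is lower
semicontinuous, so the minimum is attained, and its value is `d₁ (m₀, m₁)` by Kantorovich–Rubinstein
duality.

For the duality, when the marginals live on finite types, Sion's minimax theorem lets one exchange
the minimum over plans with the supremum over Lagrange multipliers of the marginal constraints. Both
sides of the duality satisfy the triangle inequality, and the dual side never exceeds the primal
one, so replacing `m₀` and `m₁` by finitely supported measures costs at most twice the sum of the
transport distances to them, which tends to `0` thanks to the first moments.
-/

section Minimax

variable {E F : Type*} [TopologicalSpace E] [AddCommGroup E] [Module ℝ E]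
  [IsTopologicalAddGroup E] [ContinuousSMul ℝ E] [TopologicalSpace F] [AddCommGroup F] [Module ℝ F]
  [IsTopologicalAddGroup F] [ContinuousSMul ℝ F]

theorem exists_forall_le_of_forall_exists_le {s : Set E} {t : Set F} {f : E → F → ℝ} {C : ℝ}
    (hs : s.Nonempty) (hs_convex : Convex ℝ s) (hs_compact : IsCompact s) (ht : Convex ℝ t)
    (hf_left : ∀ y ∈ t, LowerSemicontinuousOn (f · y) s)
    (hf_convex : ∀ y ∈ t, QuasiconvexOn ℝ s (f · y))
    (hf_right : ∀ x ∈ s, UpperSemicontinuousOn (f x) t)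
    (hf_concave : ∀ x ∈ s, QuasiconcaveOn ℝ t (f x))
    (hC : ∀ y ∈ t, ∃ x ∈ s, f x y ≤ C) :
    ∃ x ∈ s, ∀ y ∈ t, f x y ≤ C := by
  let g : E → F → EReal := fun x y ↦ f x y
  have coe_mono : Monotone Real.toEReal := EReal.coe_strictMono.monotone
  have hg_left : ∀ y ∈ t, LowerSemicontinuousOn (g · y) s := fun y hy ↦
    continuous_coe_real_ereal.comp_lowerSemicontinuousOn (hf_left y hy) coe_mono
  have hg_convex : ∀ y ∈ t, QuasiconvexOn ℝ s (g · y) := fun y hy ↦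
    (hf_convex y hy).monotone_comp (g := Real.toEReal) coe_mono
  have hg_concave : ∀ x ∈ s, QuasiconcaveOn ℝ t (g x) := fun x hx ↦
    (hf_concave x hx).monotone_comp (g := Real.toEReal) coe_mono
  have minimax : ⨅ x ∈ s, ⨆ y ∈ t, g x y = ⨆ y ∈ t, ⨅ x ∈ s, g x y :=
    Sion.minimax' hs hs_convex hs_compact hg_left hg_convex ht
      (fun x hx ↦ continuous_coe_real_ereal.comp_upperSemicontinuousOn (hf_right x hx) coe_mono)
      hg_concave
  obtain ⟨x, hx, hx_min⟩ : ∃ x ∈ s, IsMinOn (fun x ↦ ⨆ y ∈ t, g x y) s x :=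
    LowerSemicontinuousOn.exists_isMinOn hs hs_compact
      (lowerSemicontinuousOn_iSup fun y ↦ lowerSemicontinuousOn_iSup fun hy ↦ hg_left y hy)
  have sup_le : ⨆ y ∈ t, g x y ≤ C := calc
    ⨆ y ∈ t, g x y ≤ ⨅ x ∈ s, ⨆ y ∈ t, g x y := le_iInf₂ hx_min
    _ = ⨆ y ∈ t, ⨅ x ∈ s, g x y := minimax
    _ ≤ C := iSup₂_le fun y hy ↦
      let ⟨x', hx', hle⟩ := hC y hy
      iInf₂_le_of_le x' hx' (EReal.coe_le_coe_iff.2 hle)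
  refine ⟨x, hx, fun y hy ↦ EReal.coe_le_coe_iff.1 (le_trans ?_ sup_le)⟩
  exact le_iSup₂ (f := fun y _ ↦ g x y) y hy

end Minimax

theorem eq_zero_of_dotProduct_le {ι : Type*} [Fintype ι] {v : ι → ℝ} {C : ℝ}
    (h : ∀ a : ι → ℝ, a ⬝ᵥ v ≤ C) : v = 0 := by
  rw [← dotProduct_self_eq_zero]
  by_contra hv
  have := h (((C + 1) / (v ⬝ᵥ v)) • v)
  rw [smul_dotProduct, smul_eq_mul, div_mul_cancel₀ _ hv] at this
  linarith

section FiniteDuality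

variable {ι κ : Type*} [Fintype ι] [Fintype κ]

/-- The Lagrangian of the transport problem with cost `c` and marginals `p`, `q` on finite types: a
plan `w` is charged the cost `c` reduced by the potentials `y = (φ, ψ)`, which are the multipliers
of the two marginal constraints. -/
def transportLagrangian (c : ι × κ → ℝ) (p : ι → ℝ) (q : κ → ℝ) (w : ι × κ → ℝ)
    (y : (ι → ℝ) × (κ → ℝ)) : ℝ :=
  w ⬝ᵥ (fun k ↦ c k - y.1 k.1 - y.2 k.2) + (y.1 ⬝ᵥ p + y.2 ⬝ᵥ q)

section Lagrangian

variable (c : ι × κ → ℝ) (p : ι → ℝ) (q : κ → ℝ)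

theorem transportLagrangian_eq (w : ι × κ → ℝ) (y : (ι → ℝ) × (κ → ℝ)) :
    transportLagrangian c p q w y = w ⬝ᵥ c + (y.1 ⬝ᵥ (fun i ↦ p i - ∑ j, w (i, j)) +
      y.2 ⬝ᵥ (fun j ↦ q j - ∑ i, w (i, j))) := by
  simp only [transportLagrangian, dotProduct, mul_sub, Finset.sum_sub_distrib, Finset.mul_sum]
  have sum_fst : ∑ k : ι × κ, w k * y.1 k.1 = ∑ i, ∑ j, y.1 i * w (i, j) := by
    simp only [Fintype.sum_prod_type, mul_comm]
  have sum_snd : ∑ k : ι × κ, w k * y.2 k.2 = ∑ j, ∑ i, y.2 j * w (i, j) := by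
    simp only [Fintype.sum_prod_type_right, mul_comm]
  rw [sum_fst, sum_snd]
  ring

theorem continuous_transportLagrangian :
    Continuous fun z : (ι × κ → ℝ) × (ι → ℝ) × (κ → ℝ) ↦ transportLagrangian c p q z.1 z.2 := by
  unfold transportLagrangian dotProduct
  fun_prop

theorem convexOn_transportLagrangian (y : (ι → ℝ) × (κ → ℝ)) :
    ConvexOn ℝ (stdSimplex ℝ (ι × κ)) (transportLagrangian c p q · y) := by
  refine ⟨convex_stdSimplex ℝ _, fun w _ w' _ a b _ _ hab ↦ le_of_eq ?_⟩
  simp only [transportLagrangian, add_dotProduct, smul_dotProduct, smul_eq_mul]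
  linear_combination -(y.1 ⬝ᵥ p + y.2 ⬝ᵥ q) * hab

theorem concaveOn_transportLagrangian (w : ι × κ → ℝ) :
    ConcaveOn ℝ Set.univ (transportLagrangian c p q w) := by
  refine ⟨convex_univ, fun y _ y' _ a b _ _ hab ↦ le_of_eq ?_⟩
  simp only [transportLagrangian_eq, Prod.fst_add, Prod.snd_add, Prod.smul_fst, Prod.smul_snd,
    add_dotProduct, smul_dotProduct, smul_eq_mul]
  linear_combination (w ⬝ᵥ c) * hab

end Lagrangian

theorem exists_stdSimplex_forall_transportLagrangian_le [Nonempty (ι × κ)] {c : ι × κ → ℝ}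
    {p : ι → ℝ} {q : κ → ℝ} {C : ℝ} (hp : ∑ i, p i = 1)
    (hC : ∀ φ ψ, (∀ i j, φ i + ψ j ≤ c (i, j)) → φ ⬝ᵥ p + ψ ⬝ᵥ q ≤ C) :
    ∃ w ∈ stdSimplex ℝ (ι × κ), ∀ y, transportLagrangian c p q w y ≤ C := by
  classical
  have exists_le (y : (ι → ℝ) × (κ → ℝ)) :
      ∃ w ∈ stdSimplex ℝ (ι × κ), transportLagrangian c p q w y ≤ C := by
    -- All mass goes to a pair of least reduced cost `m`; then `φ + m`, `ψ` is dual feasible.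
    obtain ⟨k, hk⟩ := Finite.exists_min fun k : ι × κ ↦ c k - y.1 k.1 - y.2 k.2
    refine ⟨Pi.single k 1, single_mem_stdSimplex ℝ k, ?_⟩
    set m := c k - y.1 k.1 - y.2 k.2
    have hshift : m + y.1 ⬝ᵥ p = (fun i ↦ y.1 i + m) ⬝ᵥ p := by
      simp only [dotProduct, add_mul, Finset.sum_add_distrib, ← Finset.mul_sum, hp]
      ring
    rw [transportLagrangian, single_one_dotProduct, ← add_assoc, hshift]
    exact hC _ _ fun i j ↦ by linarith [hk (i, j)]
  obtain ⟨w, hw, hle⟩ := exists_forall_le_of_forall_exists_le (t := Set.univ)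
    ⟨_, single_mem_stdSimplex ℝ (Classical.arbitrary (ι × κ))⟩ (convex_stdSimplex ℝ (ι × κ))
    (isCompact_stdSimplex ℝ (ι × κ)) convex_univ
    (fun y _ ↦ ((continuous_transportLagrangian c p q).comp
      (Continuous.prodMk_left y)).lowerSemicontinuous.lowerSemicontinuousOn _)
    (fun y _ ↦ (convexOn_transportLagrangian c p q y).quasiconvexOn)
    (fun w _ ↦ ((continuous_transportLagrangian c p q).comp
      (Continuous.prodMk_right w)).upperSemicontinuous.upperSemicontinuousOn _)
    (fun w _ ↦ (concaveOn_transportLagrangian c p q w).quasiconcaveOn)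
    (fun y _ ↦ exists_le y)
  exact ⟨w, hw, fun y ↦ hle y trivial⟩

theorem exists_stdSimplex_marginals_dotProduct_le [Nonempty (ι × κ)] {c : ι × κ → ℝ}
    {p : ι → ℝ} {q : κ → ℝ} {C : ℝ} (hp : ∑ i, p i = 1)
    (hC : ∀ φ ψ, (∀ i j, φ i + ψ j ≤ c (i, j)) → φ ⬝ᵥ p + ψ ⬝ᵥ q ≤ C) :
    ∃ w ∈ stdSimplex ℝ (ι × κ), (∀ i, ∑ j, w (i, j) = p i) ∧ (∀ j, ∑ i, w (i, j) = q j) ∧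
      w ⬝ᵥ c ≤ C := by
  obtain ⟨w, hw, hle⟩ := exists_stdSimplex_forall_transportLagrangian_le hp hC
  simp only [transportLagrangian_eq, Prod.forall] at hle
  have hrow : (fun i ↦ p i - ∑ j, w (i, j)) = 0 :=
    eq_zero_of_dotProduct_le (C := C - w ⬝ᵥ c) fun a ↦ by
      have := hle a 0
      rw [zero_dotProduct] at this
      linarith
  have hcol : (fun j ↦ q j - ∑ i, w (i, j)) = 0 :=
    eq_zero_of_dotProduct_le (C := C - w ⬝ᵥ c) fun b ↦ by
      have := hle 0 b
      rw [zero_dotProduct] at this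
      linarith
  refine ⟨w, hw, fun i ↦ (sub_eq_zero.1 (congrFun hrow i)).symm,
    fun j ↦ (sub_eq_zero.1 (congrFun hcol j)).symm, by simpa using hle 0 0⟩

end FiniteDuality

/-- `γ` is a coupling (transport plan) of `μ` and `ν`: a measure on the product with these
marginals. -/
structure IsCoupling {α β : Type*} [MeasurableSpace α] [MeasurableSpace β]
    (γ : Measure (α × β)) (μ : Measure α) (ν : Measure β) : Prop where
  fst_eq : γ.fst = μ
  snd_eq : γ.snd = ν

namespace IsCoupling

variable {α β α' β' : Type*} [MeasurableSpace α] [MeasurableSpace β] [MeasurableSpace α']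
  [MeasurableSpace β'] {μ : Measure α} {ν : Measure β} {γ : Measure (α × β)}

theorem isProbabilityMeasure [IsProbabilityMeasure μ] (h : IsCoupling γ μ ν) :
    IsProbabilityMeasure γ := by
  have : IsProbabilityMeasure (γ.map Prod.fst) := by
    rw [← Measure.fst, h.fst_eq]
    infer_instance
  exact Measure.isProbabilityMeasure_of_map Prod.fst

theorem prod (μ : Measure α) (ν : Measure β) [IsProbabilityMeasure μ] [IsProbabilityMeasure ν] :
    IsCoupling (μ.prod ν) μ ν :=
  ⟨Measure.fst_prod, Measure.snd_prod⟩

theorem map_prodMk (μ : Measure α) {f : α → α'} {g : α → β'} (hf : Measurable f)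
    (hg : Measurable g) : IsCoupling (μ.map fun x ↦ (f x, g x)) (μ.map f) (μ.map g) :=
  ⟨Measure.fst_map_prodMk hg, Measure.snd_map_prodMk hf⟩

theorem swap (h : IsCoupling γ μ ν) : IsCoupling (γ.map Prod.swap) ν μ :=
  ⟨by rw [Measure.fst_map_swap, h.snd_eq], by rw [Measure.snd_map_swap, h.fst_eq]⟩

theorem map (h : IsCoupling γ μ ν) {f : α → α'} {g : β → β'} (hf : Measurable f)
    (hg : Measurable g) : IsCoupling (γ.map (Prod.map f g)) (μ.map f) (ν.map g) where
  fst_eq := by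
    rw [← h.fst_eq, Measure.fst, Measure.fst, Measure.map_map measurable_fst (hf.prodMap hg),
      Measure.map_map hf measurable_fst]
    rfl
  snd_eq := by
    rw [← h.snd_eq, Measure.snd, Measure.snd, Measure.map_map measurable_snd (hf.prodMap hg),
      Measure.map_map hg measurable_snd]
    rfl

theorem exists_lift [StandardBorelSpace β] [Nonempty β] {f : α' → α} (hf : Measurable f)
    {μ : Measure α'} [SFinite μ] [IsFiniteMeasure γ] (h : IsCoupling γ (μ.map f) ν) :
    ∃ τ : Measure (α' × β), IsCoupling τ μ ν ∧ τ.map (Prod.map f id) = γ := by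
  let κ : Kernel α' β := γ.condKernel.comap f hf
  have map_eq : (μ ⊗ₘ κ).map (Prod.map f id) = γ := by
    ext s hs
    have hf_id : Measurable (Prod.map f (id : β → β)) := hf.prodMap measurable_id
    conv_rhs => rw [← γ.disintegrate γ.condKernel, h.fst_eq]
    rw [Measure.map_apply hf_id hs, Measure.compProd_apply (hf_id hs), Measure.compProd_apply hs,
      lintegral_map (Kernel.measurable_kernel_prodMk_left hs) hf]
    rfl
  refine ⟨μ ⊗ₘ κ, ⟨Measure.fst_compProd μ κ, ?_⟩, map_eq⟩
  rw [← h.snd_eq, ← map_eq, Measure.snd, Measure.snd,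
    Measure.map_map measurable_snd (hf.prodMap measurable_id)]
  rfl

end IsCoupling

section OptimalPlans

theorem lowerSemicontinuous_lintegral_probabilityMeasure {Ω : Type*} [MeasurableSpace Ω]
    [TopologicalSpace Ω] [OpensMeasurableSpace Ω] {c : Ω → ℝ≥0} (hc : Continuous c) :
    LowerSemicontinuous fun γ : ProbabilityMeasure Ω ↦ ∫⁻ z, c z ∂(γ : Measure Ω) := by
  let truncated (n : ℕ) : BoundedContinuousFunction Ω ℝ≥0 :=
    .mkOfBound ⟨fun z ↦ min (c z) n, by fun_prop⟩ n fun x y ↦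
      abs_sub_le_of_nonneg_of_le (NNReal.coe_nonneg _) (NNReal.coe_le_coe.2 (min_le_right _ _))
        (NNReal.coe_nonneg _) (NNReal.coe_le_coe.2 (min_le_right _ _))
  have iSup_truncated (z : Ω) : ⨆ n, (truncated n z : ℝ≥0∞) = c z := by
    obtain ⟨n, hn⟩ := exists_nat_ge (c z)
    refine le_antisymm (iSup_le fun m ↦ ENNReal.coe_le_coe.2 (min_le_left _ _)) ?_
    exact le_iSup_of_le n (ENNReal.coe_le_coe.2 (le_min le_rfl hn))
  have monotone_truncated : Monotone fun n z ↦ (truncated n z : ℝ≥0∞) := fun m n hmn z ↦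
    ENNReal.coe_le_coe.2 (min_le_min_left _ (Nat.cast_le.2 hmn))
  have lintegral_eq (γ : ProbabilityMeasure Ω) :
      ∫⁻ z, c z ∂(γ : Measure Ω) = ⨆ n, ∫⁻ z, truncated n z ∂(γ : Measure Ω) := by
    simp only [← iSup_truncated]
    exact lintegral_iSup (fun n ↦ (truncated n).continuous.measurable.coe_nnreal_ennreal)
      monotone_truncated
  simp only [lintegral_eq]
  refine lowerSemicontinuous_iSup fun n ↦ Continuous.lowerSemicontinuous ?_
  exact continuous_iff_continuousAt.2 fun γ ↦
    ProbabilityMeasure.tendsto_iff_forall_lintegral_tendsto.1 tendsto_id (truncated n)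

variable {X Y : Type*} [TopologicalSpace X] [PolishSpace X] [MeasurableSpace X] [BorelSpace X]
  [TopologicalSpace Y] [PolishSpace Y] [MeasurableSpace Y] [BorelSpace Y]
  (μ : Measure X) (ν : Measure Y) [IsProbabilityMeasure μ] [IsProbabilityMeasure ν]

theorem isCompact_setOf_isCoupling :
    IsCompact {γ : ProbabilityMeasure (X × Y) | IsCoupling (γ : Measure (X × Y)) μ ν} := by
  set couplings := {γ : ProbabilityMeasure (X × Y) | IsCoupling (γ : Measure (X × Y)) μ ν}
  have tight : IsTightMeasureSet {(γ : Measure (X × Y)) | γ ∈ couplings} := by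
    refine .prodMk ((isTightMeasureSet_singleton (μ := μ)).subset ?_)
      ((isTightMeasureSet_singleton (μ := ν)).subset ?_)
    · rintro _ ⟨_, ⟨γ, hγ, rfl⟩, rfl⟩
      exact hγ.fst_eq
    · rintro _ ⟨_, ⟨γ, hγ, rfl⟩, rfl⟩
      exact hγ.snd_eq
  have closed : IsClosed couplings := by
    have eq_inter : couplings =
        {γ | γ.map measurable_fst.aemeasurable = ⟨μ, inferInstance⟩} ∩
        {γ | γ.map measurable_snd.aemeasurable = ⟨ν, inferInstance⟩} := by
      ext γ
      exact ⟨fun h ↦ ⟨Subtype.ext h.fst_eq, Subtype.ext h.snd_eq⟩,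
        fun h ↦ ⟨congrArg Subtype.val h.1, congrArg Subtype.val h.2⟩⟩
    rw [eq_inter]
    exact (isClosed_eq (ProbabilityMeasure.continuous_map continuous_fst) continuous_const).inter
      (isClosed_eq (ProbabilityMeasure.continuous_map continuous_snd) continuous_const)
  exact closed.closure_eq ▸ isCompact_closure_of_isTightMeasureSet tight

theorem exists_isCoupling_forall_lintegral_le {c : X × Y → ℝ≥0} (hc : Continuous c) :
    ∃ γ, IsCoupling γ μ ν ∧ ∀ γ', IsCoupling γ' μ ν → ∫⁻ z, c z ∂γ ≤ ∫⁻ z, c z ∂γ' := by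
  obtain ⟨γ, hγ, hmin⟩ := LowerSemicontinuousOn.exists_isMinOn
    ⟨⟨μ.prod ν, inferInstance⟩, IsCoupling.prod μ ν⟩ (isCompact_setOf_isCoupling μ ν)
    ((lowerSemicontinuous_lintegral_probabilityMeasure hc).lowerSemicontinuousOn _)
  exact ⟨γ, hγ, fun γ' hγ' ↦ hmin (a := ⟨γ', hγ'.isProbabilityMeasure⟩) hγ'⟩

end OptimalPlans

section FiniteMarginals

theorem isCoupling_sum_dirac {ι κ : Type*} [Fintype ι] [Fintype κ] [MeasurableSpace ι]
    [MeasurableSpace κ] [MeasurableSingletonClass ι] [MeasurableSingletonClass κ]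
    {μ : Measure ι} {ν : Measure κ} [IsFiniteMeasure μ] [IsFiniteMeasure ν] {w : ι × κ → ℝ}
    (hw : 0 ≤ w) (hrow : ∀ i, ∑ j, w (i, j) = μ.real {i})
    (hcol : ∀ j, ∑ i, w (i, j) = ν.real {j}) :
    IsCoupling (∑ k, ENNReal.ofReal (w k) • Measure.dirac k) μ ν where
  fst_eq := by
    classical
    refine Measure.ext_of_singleton fun i ↦ ?_
    rw [Measure.fst_apply (measurableSet_singleton i), ← ofReal_measureReal (μ := μ), ← hrow,
      ENNReal.ofReal_sum_of_nonneg fun j _ ↦ hw (i, j)]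
    simp [Fintype.sum_prod_type, Set.indicator_apply]
  snd_eq := by
    classical
    refine Measure.ext_of_singleton fun j ↦ ?_
    rw [Measure.snd_apply (measurableSet_singleton j), ← ofReal_measureReal (μ := ν), ← hcol,
      ENNReal.ofReal_sum_of_nonneg fun i _ ↦ hw (i, j)]
    simp [Fintype.sum_prod_type_right, Set.indicator_apply]

theorem exists_isCoupling_lintegral_le_of_forall_integral_le {ι κ : Type*} [Finite ι] [Finite κ]
    [MeasurableSpace ι] [MeasurableSpace κ] [MeasurableSingletonClass ι]
    [MeasurableSingletonClass κ] (μ : Measure ι) (ν : Measure κ) [IsProbabilityMeasure μ]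
    [IsProbabilityMeasure ν] {c : ι × κ → ℝ} (hc : 0 ≤ c) {C : ℝ}
    (hC : ∀ (φ : ι → ℝ) (ψ : κ → ℝ), (∀ i j, φ i + ψ j ≤ c (i, j)) →
      ∫ i, φ i ∂μ + ∫ j, ψ j ∂ν ≤ C) :
    ∃ γ, IsCoupling γ μ ν ∧ ∫⁻ k, ENNReal.ofReal (c k) ∂γ ≤ ENNReal.ofReal C := by
  have := Fintype.ofFinite ι
  have := Fintype.ofFinite κ
  have := nonempty_of_isProbabilityMeasure (μ.prod ν)
  have sum_eq_one : ∑ i, μ.real {i} = 1 := by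
    rw [sum_measureReal_singleton, Finset.coe_univ, probReal_univ]
  have hC' : ∀ φ ψ, (∀ i j, φ i + ψ j ≤ c (i, j)) →
      φ ⬝ᵥ (fun i ↦ μ.real {i}) + ψ ⬝ᵥ (fun j ↦ ν.real {j}) ≤ C := fun φ ψ h ↦ by
    simpa only [integral_fintype .of_finite, smul_eq_mul, mul_comm, dotProduct] using hC φ ψ h
  obtain ⟨w, hw, hrow, hcol, hle⟩ := exists_stdSimplex_marginals_dotProduct_le sum_eq_one hC'
  refine ⟨_, isCoupling_sum_dirac hw.1 hrow hcol, ?_⟩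
  calc ∫⁻ k, ENNReal.ofReal (c k) ∂(∑ k, ENNReal.ofReal (w k) • Measure.dirac k)
      = ∑ k, ENNReal.ofReal (w k * c k) := by
        simp [ENNReal.ofReal_mul (hw.1 _)]
    _ = ENNReal.ofReal (w ⬝ᵥ c) :=
        (ENNReal.ofReal_sum_of_nonneg fun k _ ↦ mul_nonneg (hw.1 k) (hc k)).symm
    _ ≤ ENNReal.ofReal C := ENNReal.ofReal_le_ofReal hle

end FiniteMarginals

section Wasserstein

/-- The Wasserstein-1 distance, as the optimal cost of transporting `μ` to `ν`. It takes values in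
`ℝ≥0∞`, so that no moment condition is needed. -/
noncomputable def wassersteinEDist {X : Type*} [PseudoEMetricSpace X] [MeasurableSpace X]
    (μ ν : Measure X) : ℝ≥0∞ :=
  ⨅ (γ : Measure (X × X)) (_ : IsCoupling γ μ ν), ∫⁻ z, edist z.1 z.2 ∂γ

theorem IsCoupling.wassersteinEDist_le {X : Type*} [PseudoEMetricSpace X] [MeasurableSpace X]
    {μ ν : Measure X} {γ : Measure (X × X)} (h : IsCoupling γ μ ν) :
    wassersteinEDist μ ν ≤ ∫⁻ z, edist z.1 z.2 ∂γ :=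
  iInf₂_le γ h

theorem wassersteinEDist_comm {X : Type*} [PseudoEMetricSpace X] [MeasurableSpace X]
    (μ ν : Measure X) : wassersteinEDist μ ν = wassersteinEDist ν μ := by
  have le (μ ν : Measure X) : wassersteinEDist μ ν ≤ wassersteinEDist ν μ :=
    le_iInf₂ fun γ hγ ↦ calc
      wassersteinEDist μ ν ≤ ∫⁻ z, edist z.1 z.2 ∂γ.map Prod.swap := hγ.swap.wassersteinEDist_le
      _ = ∫⁻ z, edist z.2 z.1 ∂γ := lintegral_map_equiv _ MeasurableEquiv.prodComm
      _ = ∫⁻ z, edist z.1 z.2 ∂γ := by simp only [edist_comm]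
  exact le_antisymm (le μ ν) (le ν μ)

theorem wassersteinEDist_map_le_lintegral {A X : Type*} [MeasurableSpace A] [PseudoEMetricSpace X]
    [SecondCountableTopology X] [MeasurableSpace X] [OpensMeasurableSpace X] {f g : A → X}
    (hf : Measurable f) (hg : Measurable g) (μ : Measure A) :
    wassersteinEDist (μ.map f) (μ.map g) ≤ ∫⁻ x, edist (f x) (g x) ∂μ :=
  (IsCoupling.map_prodMk μ hf hg).wassersteinEDist_le.trans_eq <|
    lintegral_map measurable_edist (hf.prodMk hg)

theorem wassersteinEDist_triangle {X : Type*} [PseudoEMetricSpace X] [SecondCountableTopology X]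
    [MeasurableSpace X] [OpensMeasurableSpace X] [StandardBorelSpace X] (μ ν ρ : Measure X)
    [IsProbabilityMeasure μ] [IsProbabilityMeasure ν] :
    wassersteinEDist μ ρ ≤ wassersteinEDist μ ν + wassersteinEDist ν ρ := by
  have := nonempty_of_isProbabilityMeasure μ
  simp only [wassersteinEDist, ENNReal.iInf_add, ENNReal.add_iInf]
  refine le_iInf₂ fun γ₂ h₂ ↦ le_iInf₂ fun γ₁ h₁ ↦ ?_
  have := h₁.isProbabilityMeasure
  have := h₂.isProbabilityMeasure
  obtain ⟨τ, hτ, hτγ₂⟩ := IsCoupling.exists_lift (μ := γ₁) measurable_snd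
    (h₁.snd_eq.symm ▸ h₂ : IsCoupling γ₂ γ₁.snd ρ)
  have glued : IsCoupling (τ.map (Prod.map Prod.fst id)) μ ρ := by
    simpa only [Measure.map_id, ← h₁.fst_eq, Measure.fst] using hτ.map measurable_fst measurable_id
  calc wassersteinEDist μ ρ
      ≤ ∫⁻ z, edist z.1 z.2 ∂τ.map (Prod.map Prod.fst id) := glued.wassersteinEDist_le
    _ = ∫⁻ z, edist z.1.1 z.2 ∂τ := lintegral_map measurable_edist (by fun_prop)
    _ ≤ ∫⁻ z, edist z.1.1 z.1.2 + edist z.1.2 z.2 ∂τ :=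
        lintegral_mono fun z ↦ edist_triangle z.1.1 z.1.2 z.2
    _ = ∫⁻ z, edist z.1.1 z.1.2 ∂τ + ∫⁻ z, edist z.1.2 z.2 ∂τ :=
        lintegral_add_left (by fun_prop) _
    _ = ∫⁻ z, edist z.1 z.2 ∂γ₁ + ∫⁻ z, edist z.1 z.2 ∂γ₂ := by
        rw [← hτγ₂, lintegral_map measurable_edist (by fun_prop), ← hτ.fst_eq, Measure.fst,
          lintegral_map measurable_edist measurable_fst]
        rfl

theorem exists_isCoupling_lintegral_eq_wassersteinEDist {X : Type*} [PseudoMetricSpace X]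
    [PolishSpace X] [MeasurableSpace X] [BorelSpace X] (μ ν : Measure X) [IsProbabilityMeasure μ]
    [IsProbabilityMeasure ν] :
    ∃ γ, IsCoupling γ μ ν ∧ ∫⁻ z, edist z.1 z.2 ∂γ = wassersteinEDist μ ν := by
  obtain ⟨γ, hγ, hle⟩ := exists_isCoupling_forall_lintegral_le μ ν
    (continuous_nndist (α := X))
  simp only [← edist_nndist] at hle
  exact ⟨γ, hγ, le_antisymm (le_iInf₂ hle) hγ.wassersteinEDist_le⟩

theorem integral_dist_eq_toReal_lintegral_edist {X : Type*} [PseudoMetricSpace X]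
    [SecondCountableTopology X] [MeasurableSpace X] [OpensMeasurableSpace X]
    (γ : Measure (X × X)) :
    ∫ z, dist z.1 z.2 ∂γ = (∫⁻ z, edist z.1 z.2 ∂γ).toReal := by
  simp only [edist_dist]
  exact integral_eq_lintegral_of_nonneg_ae (.of_forall fun _ ↦ dist_nonneg)
    measurable_dist.aestronglyMeasurable

end Wasserstein

section KantorovichRubinstein

variable {X : Type*} [PseudoEMetricSpace X] [MeasurableSpace X] {μ ν : Measure X}

/-- The dual form of the Wasserstein-1 distance, as a supremum over 1-Lipschitz test functions. It
takes values in `ℝ≥0∞`, and has its intended meaning for measures integrating all such functions. -/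
noncomputable def kantorovichRubinsteinEDist (μ ν : Measure X) : ℝ≥0∞ :=
  ⨆ (F : X → ℝ) (_ : LipschitzWith 1 F), ENNReal.ofReal (∫ x, F x ∂μ - ∫ x, F x ∂ν)

theorem ofReal_le_kantorovichRubinsteinEDist (μ ν : Measure X) {F : X → ℝ}
    (hF : LipschitzWith 1 F) :
    ENNReal.ofReal (∫ x, F x ∂μ - ∫ x, F x ∂ν) ≤ kantorovichRubinsteinEDist μ ν :=
  le_iSup₂ (f := fun F (_ : LipschitzWith 1 F) ↦
    ENNReal.ofReal (∫ x, F x ∂μ - ∫ x, F x ∂ν)) F hF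

theorem kantorovichRubinsteinEDist_triangle (μ ν ρ : Measure X) :
    kantorovichRubinsteinEDist μ ρ ≤
      kantorovichRubinsteinEDist μ ν + kantorovichRubinsteinEDist ν ρ :=
  iSup₂_le fun F hF ↦ calc
    ENNReal.ofReal (∫ x, F x ∂μ - ∫ x, F x ∂ρ)
      = ENNReal.ofReal ((∫ x, F x ∂μ - ∫ x, F x ∂ν) + (∫ x, F x ∂ν - ∫ x, F x ∂ρ)) := by
        rw [sub_add_sub_cancel]
    _ ≤ _ := ENNReal.ofReal_add_le
    _ ≤ _ := add_le_add (ofReal_le_kantorovichRubinsteinEDist μ ν hF)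
        (ofReal_le_kantorovichRubinsteinEDist ν ρ hF)

theorem isLUB_toReal_kantorovichRubinsteinEDist (h : kantorovichRubinsteinEDist μ ν ≠ ∞) :
    IsLUB {r | ∃ F : X → ℝ, LipschitzWith 1 F ∧ r = ∫ x, F x ∂μ - ∫ x, F x ∂ν}
      (kantorovichRubinsteinEDist μ ν).toReal := by
  constructor
  · rintro _ ⟨F, hF, rfl⟩
    exact (ENNReal.ofReal_le_iff_le_toReal h).1 (ofReal_le_kantorovichRubinsteinEDist μ ν hF)
  · intro b hb
    have hb_nonneg : 0 ≤ b := hb ⟨0, LipschitzWith.const' 0, by simp⟩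
    exact ENNReal.toReal_le_of_le_ofReal hb_nonneg <| iSup₂_le fun F hF ↦
      ENNReal.ofReal_le_ofReal (hb ⟨F, hF, rfl⟩)

theorem IsCoupling.ofReal_integral_sub_integral_le {γ : Measure (X × X)} (h : IsCoupling γ μ ν)
    {F : X → ℝ} (hF : LipschitzWith 1 F) (hFμ : Integrable F μ) (hFν : Integrable F ν) :
    ENNReal.ofReal (∫ x, F x ∂μ - ∫ x, F x ∂ν) ≤ ∫⁻ z, edist z.1 z.2 ∂γ := by
  rw [← h.fst_eq] at hFμ ⊢
  rw [← h.snd_eq] at hFν ⊢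
  calc ENNReal.ofReal (∫ x, F x ∂γ.fst - ∫ x, F x ∂γ.snd)
      = ENNReal.ofReal (∫ z, F z.1 - F z.2 ∂γ) := by
        rw [Measure.fst, Measure.snd,
          integral_map measurable_fst.aemeasurable hFμ.aestronglyMeasurable,
          integral_map measurable_snd.aemeasurable hFν.aestronglyMeasurable]
        exact congrArg _ (integral_sub (hFμ.comp_measurable measurable_fst)
          (hFν.comp_measurable measurable_snd)).symm
    _ ≤ ‖∫ z, F z.1 - F z.2 ∂γ‖ₑ := Real.ofReal_le_enorm _
    _ ≤ ∫⁻ z, ‖F z.1 - F z.2‖ₑ ∂γ := enorm_integral_le_lintegral_enorm _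
    _ ≤ ∫⁻ z, edist z.1 z.2 ∂γ := lintegral_mono fun z ↦ by
        simpa only [edist_eq_enorm_sub, ENNReal.coe_one, one_mul] using hF.edist_le_mul z.1 z.2

end KantorovichRubinstein

section Discrete

theorem exists_lipschitzWith_one_of_add_le_dist {ι κ X : Type*} [Finite κ] [Nonempty κ]
    [PseudoMetricSpace X] {e : ι → X} {e' : κ → X} {φ : ι → ℝ} {ψ : κ → ℝ}
    (h : ∀ i j, φ i + ψ j ≤ dist (e i) (e' j)) :
    ∃ G : X → ℝ, LipschitzWith 1 G ∧ (∀ i, φ i ≤ G (e i)) ∧ ∀ j, ψ j ≤ -G (e' j) := by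
  have := Fintype.ofFinite κ
  -- `G` is the `c`-transform of `ψ` for the cost `c = dist`.
  let G (x : X) : ℝ := Finset.univ.inf' Finset.univ_nonempty fun j ↦ dist x (e' j) - ψ j
  have G_le (x : X) (j : κ) : G x ≤ dist x (e' j) - ψ j := Finset.inf'_le _ (Finset.mem_univ j)
  refine ⟨G, LipschitzWith.of_le_add fun x y ↦ ?_, fun i ↦ ?_, fun j ↦ ?_⟩
  · refine sub_le_iff_le_add.1 (Finset.le_inf' _ _ fun j _ ↦ ?_)
    linarith [G_le x j, dist_triangle x y (e' j)]
  · exact Finset.le_inf' _ _ fun j _ ↦ le_sub_iff_add_le.2 (h i j)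
  · linarith [G_le (e' j) j, dist_self (e' j)]

theorem wassersteinEDist_map_le_kantorovichRubinsteinEDist_map {ι X : Type*} [Finite ι]
    [MeasurableSpace ι] [MeasurableSingletonClass ι] [PseudoMetricSpace X]
    [SecondCountableTopology X] [MeasurableSpace X] [OpensMeasurableSpace X] (p q : Measure ι)
    [IsProbabilityMeasure p] [IsProbabilityMeasure q] (e : ι → X) :
    wassersteinEDist (p.map e) (q.map e) ≤ kantorovichRubinsteinEDist (p.map e) (q.map e) := by
  obtain hK | hK := eq_or_ne (kantorovichRubinsteinEDist (p.map e) (q.map e)) ∞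
  · exact hK ▸ le_top
  have := nonempty_of_isProbabilityMeasure p
  have he : Measurable e := measurable_of_finite e
  have dual_le (φ ψ : ι → ℝ) (h : ∀ i j, φ i + ψ j ≤ dist (e i) (e j)) :
      ∫ i, φ i ∂p + ∫ j, ψ j ∂q ≤ (kantorovichRubinsteinEDist (p.map e) (q.map e)).toReal := by
    obtain ⟨G, hG, hφ, hψ⟩ := exists_lipschitzWith_one_of_add_le_dist h
    calc ∫ i, φ i ∂p + ∫ j, ψ j ∂q ≤ ∫ i, G (e i) ∂p + ∫ j, -G (e j) ∂q :=
          add_le_add (integral_mono .of_finite .of_finite hφ)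
            (integral_mono .of_finite .of_finite hψ)
      _ = ∫ x, G x ∂(p.map e) - ∫ x, G x ∂(q.map e) := by
          rw [integral_neg, ← sub_eq_add_neg,
            integral_map he.aemeasurable hG.continuous.measurable.aestronglyMeasurable,
            integral_map he.aemeasurable hG.continuous.measurable.aestronglyMeasurable]
      _ ≤ _ := (ENNReal.ofReal_le_iff_le_toReal hK).1 (ofReal_le_kantorovichRubinsteinEDist _ _ hG)
  obtain ⟨γ, hγ, hle⟩ := exists_isCoupling_lintegral_le_of_forall_integral_le p q
    (c := fun k ↦ dist (e k.1) (e k.2)) (fun _ ↦ dist_nonneg) dual_le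
  calc wassersteinEDist (p.map e) (q.map e)
      ≤ ∫⁻ z, edist z.1 z.2 ∂γ.map (Prod.map e e) := (hγ.map he he).wassersteinEDist_le
    _ = ∫⁻ k, ENNReal.ofReal (dist (e k.1) (e k.2)) ∂γ := by
        rw [lintegral_map measurable_edist (he.prodMap he)]
        simp only [edist_dist, Prod.map_fst, Prod.map_snd]
    _ ≤ _ := hle
    _ = _ := ENNReal.ofReal_toReal hK

theorem wassersteinEDist_map_simpleFunc_le {A X : Type*} [MeasurableSpace A] [PseudoMetricSpace X]
    [SecondCountableTopology X] [MeasurableSpace X] [OpensMeasurableSpace X]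
    [MeasurableSingletonClass X] (μ ν : Measure A)
    [IsProbabilityMeasure μ] [IsProbabilityMeasure ν] (s : SimpleFunc A X) :
    wassersteinEDist (μ.map s) (ν.map s) ≤ kantorovichRubinsteinEDist (μ.map s) (ν.map s) := by
  let T (a : A) : s.range := ⟨s a, s.mem_range_self a⟩
  have hT : Measurable T := s.measurable.subtype_mk
  have map_eq (ρ : Measure A) : ρ.map s = (ρ.map T).map Subtype.val :=
    (Measure.map_map measurable_subtype_coe hT).symm
  have := Measure.isProbabilityMeasure_map (μ := μ) hT.aemeasurable
  have := Measure.isProbabilityMeasure_map (μ := ν) hT.aemeasurable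
  rw [map_eq μ, map_eq ν]
  exact wassersteinEDist_map_le_kantorovichRubinsteinEDist_map _ _ _

end Discrete

section FirstMoment

/-- Membership in `𝒫¹`: the distance to some point, equivalently (for a finite measure) to any
point, is integrable. -/
def HasFiniteFirstMoment {X : Type*} [PseudoMetricSpace X] [MeasurableSpace X]
    (μ : Measure X) : Prop :=
  ∃ x₀, Integrable (fun x ↦ dist x x₀) μ

namespace HasFiniteFirstMoment

variable {X : Type*} [PseudoMetricSpace X] [MeasurableSpace X] [OpensMeasurableSpace X]
  {μ : Measure X}

theorem integrable_of_lipschitzWith [IsFiniteMeasure μ] (h : HasFiniteFirstMoment μ) {K : ℝ≥0}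
    {F : X → ℝ} (hF : LipschitzWith K F) : Integrable F μ := by
  obtain ⟨x₀, hx₀⟩ := h
  refine ((hx₀.const_mul K).add (integrable_const ‖F x₀‖)).mono'
    hF.continuous.measurable.aestronglyMeasurable (.of_forall fun x ↦ ?_)
  calc ‖F x‖ ≤ ‖F x - F x₀‖ + ‖F x₀‖ := by simpa using norm_add_le (F x - F x₀) (F x₀)
    _ ≤ K * dist x x₀ + ‖F x₀‖ := by gcongr; simpa [dist_eq_norm] using hF.dist_le_mul x x₀

theorem lintegral_edist_ne_top [IsFiniteMeasure μ] (h : HasFiniteFirstMoment μ) (x₀ : X) :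
    ∫⁻ x, edist x x₀ ∂μ ≠ ∞ := by
  simpa only [edist_dist] using
    (h.integrable_of_lipschitzWith (LipschitzWith.dist_left x₀)).lintegral_lt_top.ne

theorem map_simpleFunc {A : Type*} [MeasurableSpace A] (μ : Measure A) [IsProbabilityMeasure μ]
    (s : SimpleFunc A X) : HasFiniteFirstMoment (μ.map s) := by
  obtain ⟨a⟩ := nonempty_of_isProbabilityMeasure μ
  refine ⟨s a, (integrable_map_measure ?_ s.measurable.aemeasurable).2 ?_⟩
  · exact (continuous_id.dist continuous_const).measurable.aestronglyMeasurable
  · exact (s.map (dist · (s a))).integrable_of_isFiniteMeasure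

theorem tendsto_wassersteinEDist_map_nearestPt [SecondCountableTopology X] [Nonempty X]
    [IsFiniteMeasure μ] (h : HasFiniteFirstMoment μ) :
    Tendsto (fun n ↦ wassersteinEDist μ
      (μ.map (SimpleFunc.nearestPt (TopologicalSpace.denseSeq X) n))) atTop (𝓝 0) := by
  let s (n : ℕ) : SimpleFunc X X := SimpleFunc.nearestPt (TopologicalSpace.denseSeq X) n
  have tendsto_lintegral : Tendsto (fun n ↦ ∫⁻ x, edist (s n x) x ∂μ) atTop (𝓝 0) := by
    rw [← lintegral_zero (μ := μ)]
    refine tendsto_lintegral_of_dominated_convergence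
      (fun x ↦ edist x (TopologicalSpace.denseSeq X 0))
      (fun n ↦ (s n).measurable.edist measurable_id)
      (fun n ↦ .of_forall fun x ↦ ?_) (h.lintegral_edist_ne_top _) (.of_forall fun x ↦ ?_)
    · exact (SimpleFunc.edist_nearestPt_le _ x n.zero_le).trans_eq (edist_comm _ _)
    · exact tendsto_iff_edist_tendsto_0.1
        (SimpleFunc.tendsto_nearestPt (TopologicalSpace.denseRange_denseSeq X x))
  refine tendsto_of_tendsto_of_tendsto_of_le_of_le tendsto_const_nhds tendsto_lintegral
    (fun _ ↦ zero_le) fun n ↦ ?_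
  have := wassersteinEDist_map_le_lintegral measurable_id (s n).measurable μ
  simpa only [Measure.map_id, id, edist_comm] using this

end HasFiniteFirstMoment

theorem IsCoupling.lintegral_edist_ne_top {X : Type*} [PseudoMetricSpace X] [MeasurableSpace X]
    [OpensMeasurableSpace X] {μ ν : Measure X} [IsFiniteMeasure μ] [IsFiniteMeasure ν]
    {γ : Measure (X × X)} (h : IsCoupling γ μ ν) (hμ : HasFiniteFirstMoment μ)
    (hν : HasFiniteFirstMoment ν) : ∫⁻ z, edist z.1 z.2 ∂γ ≠ ∞ := by
  obtain ⟨x₀, -⟩ := id hμ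
  have measurable_edist_x₀ : Measurable (edist · x₀) :=
    (continuous_id.edist continuous_const).measurable
  have fst_ne_top : ∫⁻ z, edist z.1 x₀ ∂γ ≠ ∞ := by
    rw [← lintegral_map measurable_edist_x₀ measurable_fst, ← Measure.fst, h.fst_eq]
    exact hμ.lintegral_edist_ne_top x₀
  have snd_ne_top : ∫⁻ z, edist z.2 x₀ ∂γ ≠ ∞ := by
    rw [← lintegral_map measurable_edist_x₀ measurable_snd, ← Measure.snd, h.snd_eq]
    exact hν.lintegral_edist_ne_top x₀
  refine ne_top_of_le_ne_top (ENNReal.add_ne_top.2 ⟨fst_ne_top, snd_ne_top⟩) ?_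
  calc ∫⁻ z, edist z.1 z.2 ∂γ ≤ ∫⁻ z, edist z.1 x₀ + edist z.2 x₀ ∂γ :=
        lintegral_mono fun z ↦ edist_triangle_right z.1 z.2 x₀
    _ = _ := lintegral_add_left (measurable_edist_x₀.comp measurable_fst) _

theorem wassersteinEDist_ne_top {X : Type*} [PseudoMetricSpace X] [MeasurableSpace X]
    [OpensMeasurableSpace X] {μ ν : Measure X} [IsProbabilityMeasure μ] [IsProbabilityMeasure ν]
    (hμ : HasFiniteFirstMoment μ) (hν : HasFiniteFirstMoment ν) : wassersteinEDist μ ν ≠ ∞ :=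
  ne_top_of_le_ne_top ((IsCoupling.prod μ ν).lintegral_edist_ne_top hμ hν)
    (IsCoupling.prod μ ν).wassersteinEDist_le

theorem kantorovichRubinsteinEDist_le_wassersteinEDist {X : Type*} [PseudoMetricSpace X]
    [MeasurableSpace X] [OpensMeasurableSpace X] {μ ν : Measure X} [IsFiniteMeasure μ]
    [IsFiniteMeasure ν] (hμ : HasFiniteFirstMoment μ) (hν : HasFiniteFirstMoment ν) :
    kantorovichRubinsteinEDist μ ν ≤ wassersteinEDist μ ν :=
  iSup₂_le fun _ hF ↦ le_iInf₂ fun _ hγ ↦ hγ.ofReal_integral_sub_integral_le hF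
    (hμ.integrable_of_lipschitzWith hF) (hν.integrable_of_lipschitzWith hF)

theorem wassersteinEDist_le_kantorovichRubinsteinEDist_add {X : Type*} [PseudoMetricSpace X]
    [SecondCountableTopology X] [MeasurableSpace X] [OpensMeasurableSpace X]
    [StandardBorelSpace X] {μ ν : Measure X} [IsProbabilityMeasure μ] [IsProbabilityMeasure ν]
    (hμ : HasFiniteFirstMoment μ) (hν : HasFiniteFirstMoment ν) (s : SimpleFunc X X) :
    wassersteinEDist μ ν ≤ kantorovichRubinsteinEDist μ ν +
      2 * (wassersteinEDist μ (μ.map s) + wassersteinEDist ν (ν.map s)) := by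
  have := Measure.isProbabilityMeasure_map (μ := μ) s.measurable.aemeasurable
  have := Measure.isProbabilityMeasure_map (μ := ν) s.measurable.aemeasurable
  have dual_le : kantorovichRubinsteinEDist (μ.map s) (ν.map s) ≤
      wassersteinEDist μ (μ.map s) +
        (kantorovichRubinsteinEDist μ ν + wassersteinEDist ν (ν.map s)) := calc
    _ ≤ kantorovichRubinsteinEDist (μ.map s) μ +
        (kantorovichRubinsteinEDist μ ν + kantorovichRubinsteinEDist ν (ν.map s)) :=
      (kantorovichRubinsteinEDist_triangle _ μ _).trans
        (add_le_add_right (kantorovichRubinsteinEDist_triangle μ ν _) _)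
    _ ≤ wassersteinEDist (μ.map s) μ +
        (kantorovichRubinsteinEDist μ ν + wassersteinEDist ν (ν.map s)) := by
      gcongr
      · exact kantorovichRubinsteinEDist_le_wassersteinEDist (.map_simpleFunc μ s) hμ
      · exact kantorovichRubinsteinEDist_le_wassersteinEDist hν (.map_simpleFunc ν s)
    _ = _ := by rw [wassersteinEDist_comm]
  calc wassersteinEDist μ ν
      ≤ wassersteinEDist μ (μ.map s) +
        (wassersteinEDist (μ.map s) (ν.map s) + wassersteinEDist (ν.map s) ν) :=
      (wassersteinEDist_triangle μ (μ.map s) ν).trans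
        (add_le_add_right (wassersteinEDist_triangle _ (ν.map s) ν) _)
    _ ≤ wassersteinEDist μ (μ.map s) + (wassersteinEDist μ (μ.map s) +
        (kantorovichRubinsteinEDist μ ν + wassersteinEDist ν (ν.map s)) +
          wassersteinEDist ν (ν.map s)) := by
      rw [wassersteinEDist_comm (ν.map s)]
      gcongr
      exact (wassersteinEDist_map_simpleFunc_le μ ν s).trans dual_le
    _ = _ := by ring

theorem wassersteinEDist_eq_kantorovichRubinsteinEDist {X : Type*} [PseudoMetricSpace X]
    [SecondCountableTopology X] [MeasurableSpace X] [OpensMeasurableSpace X]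
    [StandardBorelSpace X] {μ ν : Measure X} [IsProbabilityMeasure μ] [IsProbabilityMeasure ν]
    (hμ : HasFiniteFirstMoment μ) (hν : HasFiniteFirstMoment ν) :
    wassersteinEDist μ ν = kantorovichRubinsteinEDist μ ν := by
  have := nonempty_of_isProbabilityMeasure μ
  refine le_antisymm ?_ (kantorovichRubinsteinEDist_le_wassersteinEDist hμ hν)
  have error_tendsto := ENNReal.Tendsto.const_mul (a := 2)
    (hμ.tendsto_wassersteinEDist_map_nearestPt.add hν.tendsto_wassersteinEDist_map_nearestPt)
    (.inr ENNReal.ofNat_ne_top)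
  rw [add_zero, mul_zero] at error_tendsto
  exact ge_of_tendsto' (by simpa using tendsto_const_nhds.add error_tendsto) fun n ↦
    wassersteinEDist_le_kantorovichRubinsteinEDist_add hμ hν _

end FirstMoment

theorem stmt_10_general {A X : Type*} [MeasurableSpace A] [MetricSpace X] [PolishSpace X]
    [MeasurableSpace X] [BorelSpace X] {f : A → X} (hf : Measurable f) (μ : Measure A)
    (m₁ : Measure X) [IsProbabilityMeasure μ] [IsProbabilityMeasure m₁]
    (hμ : HasFiniteFirstMoment (μ.map f)) (hm₁ : HasFiniteFirstMoment m₁) :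
    IsLeast ((fun ν : Measure (A × X) ↦ ∫ p, dist (f p.1) p.2 ∂ν) ''
      {ν | IsProbabilityMeasure ν ∧ ν.map Prod.fst = μ ∧ ν.map Prod.snd = m₁})
      (sSup {r | ∃ F : X → ℝ, LipschitzWith 1 F ∧
        r = ∫ x, F x ∂(μ.map f) - ∫ x, F x ∂m₁}) := by
  have := Measure.isProbabilityMeasure_map (μ := μ) hf.aemeasurable
  have := nonempty_of_isProbabilityMeasure m₁
  have duality := wassersteinEDist_eq_kantorovichRubinsteinEDist hμ hm₁
  have finite := wassersteinEDist_ne_top hμ hm₁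
  rw [(isLUB_toReal_kantorovichRubinsteinEDist (duality ▸ finite)).csSup_eq
    ⟨_, 0, LipschitzWith.const' 0, rfl⟩, ← duality]
  have cost_eq (ν : Measure (A × X)) : ∫ p, dist (f p.1) p.2 ∂ν =
      (∫⁻ z, edist z.1 z.2 ∂ν.map (Prod.map f id)).toReal := by
    rw [← integral_dist_eq_toReal_lintegral_edist,
      integral_map (by fun_prop) measurable_dist.aestronglyMeasurable]
    rfl
  constructor
  · obtain ⟨σ, hσ, σ_optimal⟩ := exists_isCoupling_lintegral_eq_wassersteinEDist (μ.map f) m₁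
    have := hσ.isProbabilityMeasure
    obtain ⟨ν, hν, hνσ⟩ := hσ.exists_lift hf
    exact ⟨ν, ⟨hν.isProbabilityMeasure, hν.fst_eq, hν.snd_eq⟩, by
      simp only [cost_eq, hνσ, σ_optimal]⟩
  · rintro _ ⟨ν, ⟨-, h_fst, h_snd⟩, rfl⟩
    have pushed : IsCoupling (ν.map (Prod.map f id)) (μ.map f) m₁ := by
      simpa only [Measure.map_id] using IsCoupling.map ⟨h_fst, h_snd⟩ hf measurable_id
    simp only [cost_eq]
    exact ENNReal.toReal_mono (pushed.lintegral_edist_ne_top hμ hm₁) pushed.wassersteinEDist_le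

/-- The auxiliary optimal transport problem between `μ̄₀` (a measure on `Z` with first
marginal `m₀`) and `m₁` has a solution, and its value equals the Kantorovich–Rubinstein
distance `d₁(m₀, m₁)`. -/
theorem stmt_10 {X Y : Type*}
    [MetricSpace X] [CompleteSpace X] [SecondCountableTopology X]
    [MeasurableSpace X] [BorelSpace X]
    [MetricSpace Y] [CompleteSpace Y] [SecondCountableTopology Y]
    [MeasurableSpace Y] [BorelSpace Y]
    (Z : Set (X × Y)) (hZ : IsClosed Z)
    (μ0 : Measure (X × Y)) [IsProbabilityMeasure μ0] (hμ0Z : μ0 Zᶜ = 0)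
    (m0 m1 : Measure X) [IsProbabilityMeasure m0] [IsProbabilityMeasure m1]
    (hmarg : μ0.map Prod.fst = m0)
    (hm0 : ∃ x₀ : X, Integrable (fun x => dist x x₀) m0)
    (hm1 : ∃ x₀ : X, Integrable (fun x => dist x x₀) m1)
    (d1 : ℝ)
    (hd1 : d1 = sSup {r | ∃ F : X → ℝ, LipschitzWith 1 F ∧
      r = ∫ x, F x ∂m0 - ∫ x, F x ∂m1}) :
    IsLeast ((fun ν => ∫ p : (X × Y) × X, dist p.1.1 p.2 ∂ν) ''
      {ν : Measure ((X × Y) × X) | IsProbabilityMeasure ν ∧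
        ν.map Prod.fst = μ0 ∧ ν.map Prod.snd = m1}) d1 := by
  subst hmarg hd1
  exact stmt_10_general measurable_fst μ0 m1 hm0 hm1
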